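/- Let χ be a hefty (dimension ≥ 5) quasi p-Steinberg irreducible character of G(r,1,n) with n ≥ 9 and p ≤ n a prime. Then χ is linear — contradiction; i.e., for n ≥ 9 and any prime p ≤ n, every non-linear irreducible character of G(r,1,n) vanishes at some p-regular element. Equivalently: if λ = (λ₀,…,λ_{r−1}) is an r-tuple of partitions of total size n ≥ 9 with some λ_j ∉ {(m),(1^m), ∅}, or with at least two nonempty components, and χ^λ is non-linear, then there is a p-regular element g ∈ G(r,1,n) with χ^λ(g) = 0. -/

import Mathlib

/-- The base group `(ℤ/rℤ)^n` of the wreath product, written multiplicatively. -/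
abbrev WreathBase (r n : ℕ) := Fin n → Multiplicative (ZMod r)

/-- The permutation action of `S_n` on `(ℤ/rℤ)^n` by permuting coordinates. -/
def wreathAction (r n : ℕ) : Equiv.Perm (Fin n) →* MulAut (WreathBase r n) where
  toFun σ :=
    { toFun := fun z => z ∘ σ.symm
      invFun := fun z => z ∘ σ
      left_inv := fun z => by ext i; simp
      right_inv := fun z => by ext i; simp
      map_mul' := fun _ _ => rfl }
  map_one' := by ext z i; rfl
  map_mul' σ τ := by ext z i; rfl

/-- The wreath product `G(r,1,n) = (ℤ/rℤ)^n ⋊ S_n`. -/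
abbrev GWreath (r n : ℕ) := WreathBase r n ⋊[wreathAction r n] Equiv.Perm (Fin n)

open CategoryTheory

/-!
Suppose that `χ` is irreducible and vanishes at no `p`-regular element of `Sₙ ⊆ A ≀ Sₙ`. If
`χ σ ≠ 0`, averaging over the conjugates of `σ` under the base group `Aⁿ` gives a nonzero vector on
which the factors of `Aⁿ` in each cycle of `σ` act alike. An `n`-cycle (`p ∤ n`), or an
`(n-1)`-cycle followed by a fixed-point-free permutation (`p ∣ n`), makes all factors act alike, so
that `Aⁿ` acts by scalars and `χ` restricts to an irreducible character of `Sₙ`.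

For `Sₙ` no Murnaghan–Nakayama rule is needed. The characters of the exterior powers of the
permutation representation are the coefficients of `det (1 + X g) = ∏ (1 - (-X) ^ ℓ)`, the product
over the cycle lengths `ℓ` of `g`, and division by `1 + X` gives the hook characters. On an
`n`-cycle only hook characters, and on an `(n-1)`-cycle only hooks and the near-hook virtual
characters, are nonzero, so an irreducible character that does not vanish there is one of these up
to sign. Products of few cycles of lengths prime to `p` are then exhibited on which they vanish.
-/

section SymmetricGroupCharacters

open Equiv Matrix Polynomial
open scoped BigOperators

section PermPoly

variable {α β : Type*} [Fintype α] [DecidableEq α] [Fintype β] [DecidableEq β]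

/-- The polynomial `det (1 + X P_g)`, where `P_g` is the permutation matrix of `g`: the generating
function of the values at `g` of the characters of the exterior powers of the permutation
representation. -/
noncomputable def permPoly (g : Perm α) : ℤ[X] :=
  (1 + (X : ℤ[X]) • (g.permMatrix ℤ).map C).det

/-- The principal minor of the permutation matrix of `g` with rows and columns in `S`. -/
def permMinor {α : Type*} [DecidableEq α] (S : Finset α) (g : Perm α) : ℤ :=
  ((g.permMatrix ℤ).submatrix (Subtype.val : S → α) (Subtype.val : S → α)).det

omit [Fintype α] in
lemma permMatrix_apply_eq {R : Type*} [Zero R] [One R] (g : Perm α) (i j : α) :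
    g.permMatrix R i j = if g i = j then 1 else 0 := by
  simp [Equiv.toPEquiv_apply, PEquiv.toMatrix_apply, eq_comm]

lemma coeff_permPoly (g : Perm α) (k : ℕ) :
    (permPoly g).coeff k = ∑ S ∈ Finset.univ.powersetCard k, permMinor S g :=
  coeff_det_one_add_X_smul_eq_sum_minors _ k

lemma permPoly_permCongr (ε : α ≃ β) (g : Perm α) : permPoly (ε.permCongr g) = permPoly g := by
  unfold permPoly
  rw [← Matrix.det_reindex_self ε]
  congr 1
  ext i j : 2
  simp only [Matrix.add_apply, Matrix.smul_apply, Matrix.map_apply, permMatrix_apply_eq,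
    Matrix.one_apply, Equiv.permCongr_apply, Matrix.reindex_apply, Matrix.submatrix_apply,
    ← Equiv.eq_symm_apply, EmbeddingLike.apply_eq_iff_eq]

lemma permPoly_sumCongr (a : Perm α) (b : Perm β) :
    permPoly (Equiv.sumCongr a b) = permPoly a * permPoly b := by
  unfold permPoly
  rw [← Matrix.det_fromBlocks_zero₂₁ _ 0]
  congr 1
  ext i j : 2
  rcases i with i | i <;> rcases j with j | j <;> simp [Matrix.one_apply]

lemma permPoly_one : permPoly (1 : Perm α) = (1 + X) ^ Fintype.card α := by
  have h : (1 : Matrix α α ℤ[X]) + (X : ℤ[X]) • (1 : Matrix α α ℤ).map C =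
      Matrix.diagonal fun _ => 1 + X := by
    rw [Matrix.map_one _ C.map_zero C.map_one, ← Matrix.diagonal_one, ← Matrix.diagonal_smul,
      Matrix.diagonal_add]
    simp
  rw [permPoly, permMatrix_one, h, Matrix.det_diagonal, Finset.prod_const, Finset.card_univ]

omit [Fintype α] in
lemma permMinor_eq_zero {S : Finset α} {g : Perm α} {i : α} (hi : i ∈ S) (hgi : g i ∉ S) :
    permMinor S g = 0 := by
  refine Matrix.det_eq_zero_of_row_eq_zero ⟨i, hi⟩ fun j => ?_
  rw [Matrix.submatrix_apply, permMatrix_apply_eq, if_neg]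
  intro h
  exact hgi (h ▸ j.2)

omit [Fintype α] in
lemma permMinor_eq_sign {S : Finset α} {g : Perm α} (h : ∀ i, g i ∈ S ↔ i ∈ S) :
    permMinor S g = Perm.sign (g.subtypePerm h) := by
  rw [← Int.cast_id (n := (Perm.sign _ : ℤ)), ← Matrix.det_permutation, permMinor]
  congr 1
  ext i j
  simp [Subtype.ext_iff]

lemma permMinor_univ (g : Perm α) : permMinor Finset.univ g = Perm.sign g := by
  rw [permMinor_eq_sign (by simp),
    ← Perm.sign_permCongr (Equiv.subtypeUnivEquiv Finset.mem_univ)]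
  congr 1

omit [Fintype β] in
lemma permMinor_sumCongr (a : Perm α) (b : Perm β) :
    permMinor (Finset.univ.map Function.Embedding.inl) (Equiv.sumCongr a b) = Perm.sign a := by
  let e : α ≃ (Finset.univ.map Function.Embedding.inl : Finset (α ⊕ β)) :=
    (Equiv.ofInjective Sum.inl Sum.inl_injective).trans (Equiv.subtypeEquivRight (by simp))
  rw [permMinor_eq_sign (by rintro (i | i) <;> simp), ← Perm.sign_permCongr e a]
  congr 2
  ext ⟨i, hi⟩
  obtain ⟨i, rfl⟩ : ∃ j, Sum.inl j = i := by simpa using hi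
  rw [Equiv.permCongr_apply, show e.symm ⟨Sum.inl i, hi⟩ = i from e.symm_apply_apply i]
  rfl

omit [Fintype α] [Fintype β] in
lemma permMinor_permCongr (ε : α ≃ β) (g : Perm α) (S : Finset α) :
    permMinor (S.map ε.toEmbedding) (ε.permCongr g) = permMinor S g := by
  let e : S ≃ S.map ε.toEmbedding := ε.subtypeEquiv fun i => by simp
  rw [permMinor, ← Matrix.det_submatrix_equiv_self e, permMinor]
  congr 1
  ext i j
  simp [e]

lemma coeff_zero_permPoly (g : Perm α) : (permPoly g).coeff 0 = 1 := by
  simp [coeff_permPoly, permMinor]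

lemma coeff_card_permPoly (g : Perm α) : (permPoly g).coeff (Fintype.card α) = Perm.sign g := by
  rw [coeff_permPoly, ← Finset.card_univ, Finset.powersetCard_self, Finset.sum_singleton,
    permMinor_univ]

lemma one_add_X_dvd_permPoly [Nonempty α] (g : Perm α) : (1 + X : ℤ[X]) ∣ permPoly g := by
  let M : Matrix α α ℤ[X] := 1 + (X : ℤ[X]) • (g.permMatrix ℤ).map C
  have h_eigenvector : M *ᵥ 1 = (1 + X : ℤ[X]) • 1 := by
    ext1 i
    simp [M, mulVec, dotProduct, Finset.sum_add_distrib, one_apply]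
  have h_det : permPoly g • (1 : α → ℤ[X]) = (1 + X : ℤ[X]) • (M.adjugate *ᵥ 1) := by
    rw [← mulVec_smul, ← h_eigenvector, mulVec_mulVec, adjugate_mul, smul_mulVec, one_mulVec]
    rfl
  have h_apply := congrFun h_det (Classical.arbitrary α)
  exact ⟨_, by simpa using h_apply⟩

lemma permMinor_eq_zero_of_forall_sameCycle {g : Perm α} (h : ∀ x y, g.SameCycle x y)
    {S : Finset α} (h_nonempty : S.Nonempty) (h_univ : S ≠ Finset.univ) : permMinor S g = 0 := by
  by_contra h_minor
  have h_maps : ∀ i ∈ S, g i ∈ S := fun i hi => by_contra fun hgi =>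
    h_minor (permMinor_eq_zero hi hgi)
  have h_pow : ∀ k : ℕ, ∀ i ∈ S, (g ^ k) i ∈ S := fun k i hi => by
    rw [Perm.coe_pow]
    exact Set.MapsTo.iterate h_maps k hi
  obtain ⟨x, hx⟩ := h_nonempty
  refine h_univ (Finset.eq_univ_iff_forall.mpr fun y => ?_)
  obtain ⟨k, -, rfl⟩ := (h x y).exists_pow_eq'
  exact h_pow k x hx

lemma permPoly_of_forall_sameCycle [Nonempty α] {g : Perm α} (h : ∀ x y, g.SameCycle x y) :
    permPoly g = 1 + C (Perm.sign g : ℤ) * X ^ Fintype.card α := by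
  ext k
  rw [coeff_add, coeff_one, coeff_C_mul, coeff_X_pow]
  obtain rfl | hk_zero := eq_or_ne k 0
  · simp [coeff_zero_permPoly, Fintype.card_ne_zero.symm]
  obtain rfl | hk_card := eq_or_ne k (Fintype.card α)
  · simp [coeff_card_permPoly, hk_zero]
  rw [coeff_permPoly, if_neg hk_zero, if_neg hk_card, mul_zero, add_zero]
  refine Finset.sum_eq_zero fun S hS => permMinor_eq_zero_of_forall_sameCycle h ?_ ?_
  · rw [← Finset.card_ne_zero, (Finset.mem_powersetCard.mp hS).2]
    exact hk_zero
  · rintro rfl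
    exact hk_card (Finset.mem_powersetCard.mp hS).2.symm

lemma sameCycle_finRotate {n : ℕ} (x y : Fin n) : (finRotate n).SameCycle x y := by
  obtain hn | hn := lt_or_ge n 2
  · have : Subsingleton (Fin n) := Fin.subsingleton_iff_le_one.mpr (by omega)
    exact (Subsingleton.elim x y).sameCycle _
  have h_moves : ∀ z, finRotate n z ≠ z := fun z => by
    rw [← Perm.mem_support, support_finRotate_of_le hn]
    exact Finset.mem_univ z
  exact (isCycle_finRotate_of_le hn).sameCycle (h_moves x) (h_moves y)

lemma permPoly_finRotate {n : ℕ} (hn : n ≠ 0) : permPoly (finRotate n) = 1 - (-X) ^ n := by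
  obtain ⟨m, rfl⟩ := Nat.exists_eq_succ_of_ne_zero hn
  rw [permPoly_of_forall_sameCycle sameCycle_finRotate, sign_finRotate, Fintype.card_fin]
  simp only [Nat.succ_eq_add_one, Nat.add_sub_cancel, Units.val_pow_eq_pow_val, Units.val_neg,
    Units.val_one, map_pow, map_neg, map_one]
  ring

/-- The character of the `k`-th exterior power of the permutation representation. -/
noncomputable def extChar (k : ℕ) (g : Perm α) : ℤ := (permPoly g).coeff k

lemma extChar_eq_sum_permMinor (k : ℕ) (g : Perm α) :
    extChar k g = ∑ S ∈ Finset.univ.powersetCard k, permMinor S g :=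
  coeff_permPoly g k

lemma extChar_zero (g : Perm α) : extChar 0 g = 1 := coeff_zero_permPoly g

lemma extChar_eq_zero_of_card_lt {k : ℕ} (hk : Fintype.card α < k) (g : Perm α) :
    extChar k g = 0 := by
  rw [extChar_eq_sum_permMinor, Finset.powersetCard_eq_empty.mpr (by simpa using hk),
    Finset.sum_empty]

lemma extChar_permCongr (ε : α ≃ β) (k : ℕ) (g : Perm α) :
    extChar k (ε.permCongr g) = extChar k g := by
  simp only [extChar, permPoly_permCongr]

lemma extChar_sumCongr (k : ℕ) (a : Perm α) (b : Perm β) : extChar k (Equiv.sumCongr a b) =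
    ∑ x ∈ Finset.HasAntidiagonal.antidiagonal k, extChar x.1 a * extChar x.2 b := by
  simp only [extChar, permPoly_sumCongr, coeff_mul]

end PermPoly

/-- A function on a group is a class function if it is constant on conjugacy classes. -/
def IsClassFun {G X : Type*} [Group G] (f : G → X) : Prop := ∀ g h, f (h * g * h⁻¹) = f g

section Frobenius

variable {α β γ : Type*} {K X Y : Type*} [Field K] [CharZero K]

lemma IsClassFun.comp {G : Type*} [Group G] {f : G → X} (hf : IsClassFun f) (φ : X → Y) :
    IsClassFun fun g => φ (f g) := fun g h => congrArg φ (hf g h)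

lemma IsClassFun.mul {G : Type*} [Group G] [Mul X] {f f' : G → X} (hf : IsClassFun f)
    (hf' : IsClassFun f') : IsClassFun fun g => f g * f' g := fun g h => by
  simp only [hf g h, hf' g h]

lemma IsClassFun.comp_monoidHom {G H : Type*} [Group G] [Group H] {f : G → X}
    (hf : IsClassFun f) (φ : H →* G) : IsClassFun fun h => f (φ h) := fun g h => by
  simp only [map_mul, map_inv, hf _ _]

variable [Fintype α] [DecidableEq α] [Fintype β] [DecidableEq β] [Fintype γ] [DecidableEq γ]

lemma isClassFun_sign : IsClassFun (Perm.sign : Perm α → ℤˣ) := fun g h =>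
  Perm.sign_permCongr h g

lemma expect_mul_permMinor_eq {f : Perm α → K} (hf : IsClassFun f) {S T : Finset α}
    (h : S.card = T.card) : 𝔼 g, f g * permMinor S g = 𝔼 g, f g * permMinor T g := by
  let ε : Perm α := (Finset.equivOfCardEq h).extendSubtype
  have h_map : T = S.map ε.toEmbedding := by
    refine (Finset.eq_of_subset_of_card_le ?_ (by simp [h])).symm
    intro x hx
    obtain ⟨y, hy, rfl⟩ := Finset.mem_map.mp hx
    exact (Finset.equivOfCardEq h).extendSubtype_mem y hy
  refine Fintype.expect_equiv ε.permCongr _ _ fun g => ?_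
  rw [h_map, permMinor_permCongr, show ε.permCongr g = ε * g * ε⁻¹ from rfl, hf]

lemma sum_mul_permMinor_inl {R : Type*} [CommRing R] (f : Perm (α ⊕ β) → R) :
    ∑ g, f g * permMinor (Finset.univ.map Function.Embedding.inl) g =
      ∑ x : Perm α × Perm β, (Perm.sign x.1 : ℤ) * f (Equiv.sumCongr x.1 x.2) := by
  symm
  refine Finset.sum_of_injOn (Perm.sumCongrHom α β) Perm.sumCongrHom_injective.injOn (by simp)
    (fun g _ hg => ?_) ?_
  · have h_maps : ¬ Set.MapsTo g (Set.range Sum.inl) (Set.range Sum.inl) := fun h => by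
      obtain ⟨x, rfl⟩ := Perm.mem_sumCongrHom_range_of_perm_mapsTo_inl h
      exact hg ⟨x, by simp⟩
    simp only [Set.MapsTo, not_forall] at h_maps
    obtain ⟨_, ⟨a, rfl⟩, ha⟩ := h_maps
    rw [permMinor_eq_zero (i := Sum.inl a) (by simp) (by simpa using ha), Int.cast_zero, mul_zero]
  · rintro ⟨a, b⟩ _
    simp only [Perm.sumCongrHom_apply]
    rw [permMinor_sumCongr, mul_comm]

lemma choose_mul_expect_mul_permMinor_inl (f : Perm (α ⊕ β) → K) :
    (Fintype.card α + Fintype.card β).choose (Fintype.card α) *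
        𝔼 g, f g * permMinor (Finset.univ.map Function.Embedding.inl) g =
      𝔼 a : Perm α, (Perm.sign a : ℤ) * 𝔼 b : Perm β, f (Equiv.sumCongr a b) := by
  simp only [Finset.mul_expect]
  rw [← Finset.expect_product' Finset.univ Finset.univ
      fun (a : Perm α) (b : Perm β) => (Perm.sign a : ℤ) * f (Equiv.sumCongr a b),
    Finset.univ_product_univ, ← Finset.mul_expect, Fintype.expect_eq_sum_div_card,
    Fintype.expect_eq_sum_div_card,
    sum_mul_permMinor_inl, Fintype.card_prod, Fintype.card_perm, Fintype.card_perm,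
    Fintype.card_perm, Fintype.card_sum, ← Nat.add_choose_mul_factorial_mul_factorial,
    Nat.choose_symm_add]
  have h_choose : ((Fintype.card α + Fintype.card β).choose (Fintype.card β) : K) ≠ 0 :=
    Nat.cast_ne_zero.mpr (Nat.choose_pos (Nat.le_add_left _ _)).ne'
  push_cast
  field_simp

/-- This is Frobenius reciprocity: `extChar (card α)` is induced from `sign ⊠ 1` on the Young
subgroup `Perm α × Perm β`. -/
lemma expect_mul_extChar_card (ε : α ⊕ β ≃ γ) {f : Perm γ → K} (hf : IsClassFun f) :
    𝔼 g, f g * extChar (Fintype.card α) g =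
      𝔼 a : Perm α, (Perm.sign a : ℤ) *
        𝔼 b : Perm β, f (ε.permCongr (Equiv.sumCongr a b)) := by
  have h_minors : ∀ S ∈ (Finset.univ : Finset (α ⊕ β)).powersetCard (Fintype.card α),
      𝔼 g, f (ε.permCongr g) * permMinor S g =
        𝔼 g, f (ε.permCongr g) * permMinor (Finset.univ.map Function.Embedding.inl) g :=
    fun S hS => expect_mul_permMinor_eq (hf.comp_monoidHom ε.permCongrHom.toMonoidHom)
      (by simp [(Finset.mem_powersetCard.mp hS).2])
  calc 𝔼 g, f g * extChar (Fintype.card α) g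
      = 𝔼 g, f (ε.permCongr g) * extChar (Fintype.card α) g :=
        (Fintype.expect_equiv ε.permCongr _ _ fun g => by rw [extChar_permCongr]).symm
    _ = ∑ S ∈ (Finset.univ : Finset (α ⊕ β)).powersetCard (Fintype.card α),
          𝔼 g, f (ε.permCongr g) * permMinor S g := by
        simp only [extChar_eq_sum_permMinor, Int.cast_sum, Finset.mul_sum]
        exact Finset.expect_sum_comm _ _ _
    _ = _ := by
        rw [Finset.sum_congr rfl h_minors, Finset.sum_const, Finset.card_powersetCard,
          Finset.card_univ, Fintype.card_sum, nsmul_eq_mul, choose_mul_expect_mul_permMinor_inl]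

lemma expect_mul_extChar {k m : ℕ} (ε : Fin k ⊕ Fin m ≃ γ) {f : Perm γ → K} (hf : IsClassFun f) :
    𝔼 g, f g * extChar k g = 𝔼 a : Perm (Fin k), (Perm.sign a : ℤ) *
      𝔼 b : Perm (Fin m), f (ε.permCongr (Equiv.sumCongr a b)) := by
  simpa only [Fintype.card_fin] using expect_mul_extChar_card ε hf

omit [Fintype α] [DecidableEq α] in
lemma expect_mul_extChar_one [Unique α] (ε : α ⊕ β ≃ γ) {f : Perm γ → K} (hf : IsClassFun f) :
    𝔼 g, f g * extChar 1 g = 𝔼 b : Perm β, f (ε.permCongr (Equiv.sumCongr 1 b)) := by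
  classical
  have h_frob := expect_mul_extChar_card ε hf
  rw [Fintype.card_unique] at h_frob
  simpa [Subsingleton.elim _ (1 : Perm α)] using h_frob

end Frobenius

/-- The alternating sum `f k - f (k - 1) + ⋯ ± f 0`. -/
def altSum {R : Type*} [Sub R] (f : ℕ → R) : ℕ → R
  | 0 => f 0
  | k + 1 => f (k + 1) - altSum f k

section ExtChar

variable {α β : Type*} [Fintype α] [DecidableEq α] [Fintype β] [DecidableEq β]

/-- The character of the `k`-th exterior power of the standard representation, attached to the
hook `(n - k, 1^k)`. -/
noncomputable def hookChar (k : ℕ) (g : Perm α) : ℤ := altSum (extChar · g) k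

/-- The alternating sum of the characters `hookChar`, a virtual character which restricts to
`hookChar` on point stabilizers. -/
noncomputable def hookSum (k : ℕ) (g : Perm α) : ℤ := altSum (hookChar · g) k

lemma hookChar_zero (g : Perm α) : hookChar 0 g = 1 := coeff_zero_permPoly g

lemma hookSum_zero (g : Perm α) : hookSum 0 g = 1 := coeff_zero_permPoly g

lemma hookChar_succ (k : ℕ) (g : Perm α) :
    hookChar (k + 1) g = extChar (k + 1) g - hookChar k g := rfl

lemma hookSum_succ (k : ℕ) (g : Perm α) :
    hookSum (k + 1) g = hookChar (k + 1) g - hookSum k g := rfl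

lemma hookChar_permCongr (ε : α ≃ β) (k : ℕ) (g : Perm α) :
    hookChar k (ε.permCongr g) = hookChar k g := by
  simp only [hookChar, extChar_permCongr]

lemma hookSum_permCongr (ε : α ≃ β) (k : ℕ) (g : Perm α) :
    hookSum k (ε.permCongr g) = hookSum k g := by
  simp only [hookSum, hookChar_permCongr]

lemma isClassFun_extChar (k : ℕ) : IsClassFun (extChar k : Perm α → ℤ) :=
  fun g h => extChar_permCongr h k g

lemma isClassFun_hookChar (k : ℕ) : IsClassFun (hookChar k : Perm α → ℤ) :=
  fun g h => hookChar_permCongr h k g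

lemma isClassFun_hookSum (k : ℕ) : IsClassFun (hookSum k : Perm α → ℤ) :=
  fun g h => hookSum_permCongr h k g

end ExtChar

section Orthogonality

variable {α : Type*} [Fintype α] [DecidableEq α] {K : Type*} [Field K] [CharZero K]

lemma expect_sign :
    𝔼 a : Perm α, ((Perm.sign a : ℤ) : K) = if Fintype.card α ≤ 1 then 1 else 0 := by
  split_ifs with h
  · have : Subsingleton α := Fintype.card_le_one_iff_subsingleton.mp h
    simp [Subsingleton.elim _ (1 : Perm α)]
  · obtain ⟨x, y, hxy⟩ := Fintype.exists_pair_of_one_lt_card (not_le.mp h)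
    have h_swap :
        𝔼 a : Perm α, ((Perm.sign a : ℤ) : K) = -𝔼 a : Perm α, ((Perm.sign a : ℤ) : K) := by
      rw [← Finset.expect_neg_distrib]
      exact Fintype.expect_equiv (Equiv.mulLeft (swap x y)) _ _ fun a => by
        simp [Perm.sign_swap hxy]
    exact self_eq_neg.mp h_swap

lemma expect_extChar (k : ℕ) : 𝔼 g : Perm α, (extChar k g : K) =
    if k = 0 ∨ (k = 1 ∧ Fintype.card α ≠ 0) then 1 else 0 := by
  obtain h | h := lt_or_ge (Fintype.card α) k
  · simp only [extChar_eq_zero_of_card_lt h, Int.cast_zero, Finset.expect_const_zero]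
    rw [if_neg (by omega)]
  · have ε : Fin k ⊕ Fin (Fintype.card α - k) ≃ α :=
      Fintype.equivOfCardEq (by simp; omega)
    have h_frob := expect_mul_extChar ε (f := fun _ => (1 : K)) fun _ _ => rfl
    simp only [one_mul, Fintype.card_fin, Fintype.expect_one, mul_one, expect_sign] at h_frob
    rw [h_frob]
    congr 1
    simp only [eq_iff_iff]
    omega

lemma expect_sign_mul_extChar (k : ℕ) :
    𝔼 g : Perm α, ((Perm.sign g : ℤ) : K) * extChar k g =
      if k = Fintype.card α ∨ k + 1 = Fintype.card α then 1 else 0 := by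
  obtain h | h := lt_or_ge (Fintype.card α) k
  · simp only [extChar_eq_zero_of_card_lt h, Int.cast_zero, mul_zero, Finset.expect_const_zero]
    rw [if_neg (by omega)]
  · have ε : Fin k ⊕ Fin (Fintype.card α - k) ≃ α :=
      Fintype.equivOfCardEq (by simp; omega)
    rw [expect_mul_extChar ε (isClassFun_sign.comp fun u => ((u : ℤ) : K))]
    have h_sq (a : Perm (Fin k)) : ((Perm.sign a : ℤ) : K) * (Perm.sign a : ℤ) = 1 := by
      rw [← Int.cast_mul, Int.units_coe_mul_self, Int.cast_one]
    simp only [Fintype.card_fin, Perm.sign_permCongr, Perm.sign_sumCongr, Units.val_mul,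
      Int.cast_mul, ← Finset.mul_expect, expect_sign, ← mul_assoc, h_sq, one_mul,
      Fintype.expect_const]
    congr 1
    simp only [eq_iff_iff]
    omega

lemma expect_extChar_mul_extChar {j : ℕ} (hj : j ≤ Fintype.card α) (k : ℕ) :
    𝔼 g : Perm α, (extChar j g : K) * extChar k g =
      ∑ x ∈ Finset.HasAntidiagonal.antidiagonal k, (if x.1 = j ∨ x.1 + 1 = j then 1 else 0) *
        (if x.2 = 0 ∨ (x.2 = 1 ∧ Fintype.card α ≠ j) then 1 else 0) := by
  have ε : Fin j ⊕ Fin (Fintype.card α - j) ≃ α := Fintype.equivOfCardEq (by simp; omega)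
  have h_compl : Fintype.card α - j ≠ 0 ↔ Fintype.card α ≠ j := by omega
  simp only [mul_comm (extChar j _ : K)]
  rw [expect_mul_extChar ε ((isClassFun_extChar k).comp (Int.cast : ℤ → K))]
  simp only [Fintype.card_fin, extChar_permCongr, extChar_sumCongr, Int.cast_sum, Int.cast_mul,
    Finset.expect_sum_comm, ← Finset.mul_expect, expect_extChar, Finset.mul_sum, ← mul_assoc,
    ← Finset.expect_mul, expect_sign_mul_extChar, h_compl]

lemma sum_antidiagonal_mul_indicator {R : Type*} [NonAssocSemiring R] (f : ℕ → R) (P : Prop)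
    [Decidable P] (k : ℕ) :
    ∑ x ∈ Finset.HasAntidiagonal.antidiagonal k,
        f x.1 * (if x.2 = 0 ∨ (x.2 = 1 ∧ P) then 1 else 0) =
      f k + if P ∧ k ≠ 0 then f (k - 1) else 0 := by
  rcases k with _ | _ | k
  · simp
  · simp [Finset.Nat.sum_antidiagonal_succ']
  · simp [Finset.Nat.sum_antidiagonal_succ']

lemma expect_extChar_mul_extChar_of_lt {j : ℕ} (hj : j ≠ 0) (hj' : j < Fintype.card α) (k : ℕ) :
    𝔼 g : Perm α, (extChar j g : K) * extChar k g =
      (if k + 1 = j then 1 else 0) + (if k = j then 2 else 0) + if k = j + 1 then 1 else 0 := by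
  rw [expect_extChar_mul_extChar hj'.le,
    sum_antidiagonal_mul_indicator (fun u => if u = j ∨ u + 1 = j then 1 else 0)]
  split_ifs <;> first | omega | norm_num

lemma expect_extChar_mul_self {k : ℕ} (hk : k ≠ 0) (hk' : k ≤ Fintype.card α) :
    𝔼 g : Perm α, (extChar k g : K) * extChar k g = if k = Fintype.card α then 1 else 2 := by
  rw [expect_extChar_mul_extChar hk',
    sum_antidiagonal_mul_indicator (fun u => if u = k ∨ u + 1 = k then 1 else 0)]
  split_ifs <;> first | omega | norm_num

lemma expect_hookChar_mul_extChar {j : ℕ} (hj : j < Fintype.card α) (k : ℕ) :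
    𝔼 g : Perm α, (hookChar j g : K) * extChar k g =
      (if k = j then 1 else 0) + if k = j + 1 then 1 else 0 := by
  induction j with
  | zero =>
    simp only [hookChar_zero, Int.cast_one, one_mul, expect_extChar]
    split_ifs <;> first | omega | norm_num
  | succ j ih =>
    simp only [hookChar_succ, Int.cast_sub, sub_mul, Finset.expect_sub_distrib]
    rw [ih (by omega), expect_extChar_mul_extChar_of_lt (by omega) hj]
    split_ifs <;> first | omega | norm_num

lemma expect_hookChar_mul_hookChar {j : ℕ} (hj : j < Fintype.card α) (k : ℕ) :
    𝔼 g : Perm α, (hookChar j g : K) * hookChar k g = if k = j then 1 else 0 := by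
  induction k with
  | zero => simpa [extChar_zero, hookChar_zero] using expect_hookChar_mul_extChar (K := K) hj 0
  | succ k ih =>
    simp only [hookChar_succ k, Int.cast_sub, mul_sub, Finset.expect_sub_distrib]
    rw [ih, expect_hookChar_mul_extChar hj]
    split_ifs <;> first | omega | norm_num

end Orthogonality

section Restriction

variable {α β γ : Type*} [Fintype α] [DecidableEq α] [Fintype β] [DecidableEq β]
  [Fintype γ] [DecidableEq γ] {K : Type*} [Field K] [CharZero K]

lemma permPoly_of_unique [Unique α] (a : Perm α) : permPoly a = 1 + X := by
  rw [Subsingleton.elim a 1, permPoly_one, Fintype.card_unique, pow_one]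

lemma extChar_succ_sumCongr [Unique α] (k : ℕ) (a : Perm α) (b : Perm β) :
    extChar (k + 1) (Equiv.sumCongr a b) = extChar (k + 1) b + extChar k b := by
  simp only [extChar, permPoly_sumCongr, permPoly_of_unique, add_mul, one_mul, coeff_add,
    coeff_X_mul]

lemma hookChar_sumCongr [Unique α] (k : ℕ) (a : Perm α) (b : Perm β) :
    hookChar k (Equiv.sumCongr a b) = extChar k b := by
  induction k with
  | zero => rw [hookChar_zero, extChar_zero]
  | succ k ih => rw [hookChar_succ, ih, extChar_succ_sumCongr, add_sub_cancel_right]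

lemma hookSum_sumCongr [Unique α] (k : ℕ) (a : Perm α) (b : Perm β) :
    hookSum k (Equiv.sumCongr a b) = hookChar k b := by
  induction k with
  | zero => rw [hookSum_zero, hookChar_zero]
  | succ k ih => rw [hookSum_succ, ih, hookChar_sumCongr, hookChar_succ]

/-- The character attached to `(n - k - 1, 2, 1^(k - 1))`, for `1 ≤ k` and `k + 3 ≤ n`. -/
noncomputable def nearHookChar (k : ℕ) (g : Perm α) : ℤ :=
  extChar 1 g * hookSum k g - extChar (k + 1) g

lemma extChar_one_mul_hookSum (k : ℕ) (g : Perm α) :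
    extChar 1 g * hookSum k g = nearHookChar k g + hookChar k g + hookChar (k + 1) g := by
  rw [nearHookChar, hookChar_succ]
  ring

lemma expect_hookSum_mul_extChar_mul_extChar_one {k : ℕ} (hk : k + 1 < Fintype.card α) :
    𝔼 g : Perm α, (hookSum k g : K) * extChar (k + 1) g * extChar 1 g = 2 := by
  have ε : Fin 1 ⊕ Fin (Fintype.card α - 1) ≃ α := Fintype.equivOfCardEq (by simp; omega)
  rw [expect_mul_extChar_one ε
    (((isClassFun_hookSum k).comp _).mul ((isClassFun_extChar (k + 1)).comp _))]
  simp only [hookSum_permCongr, hookSum_sumCongr, extChar_permCongr, extChar_succ_sumCongr,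
    Int.cast_add, mul_add, Finset.expect_add_distrib]
  rw [expect_hookChar_mul_extChar (by simp; omega), expect_hookChar_mul_extChar (by simp; omega)]
  norm_num

lemma expect_hookChar_sq_mul_extChar_one {k : ℕ} (hk : k ≠ 0) (hk' : k < Fintype.card α) :
    𝔼 g : Perm α, (hookChar k g : K) * hookChar k g * extChar 1 g =
      if k + 1 = Fintype.card α then 1 else 2 := by
  have ε : Fin 1 ⊕ Fin (Fintype.card α - 1) ≃ α := Fintype.equivOfCardEq (by simp; omega)
  rw [expect_mul_extChar_one ε
    (((isClassFun_hookChar k).comp _).mul ((isClassFun_hookChar k).comp _))]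
  simp only [hookChar_permCongr, hookChar_sumCongr]
  rw [expect_extChar_mul_self hk (by simp; omega), Fintype.card_fin]
  congr 1
  simp only [eq_iff_iff]
  omega

lemma expect_hookSum_sq_mul_extChar_one_sq {k : ℕ} (hk : k ≠ 0) (hk' : k + 1 < Fintype.card α) :
    𝔼 g : Perm α, (hookSum k g : K) * hookSum k g * extChar 1 g * extChar 1 g =
      if k + 2 = Fintype.card α then 2 else 3 := by
  have ε : Fin 1 ⊕ Fin (Fintype.card α - 1) ≃ α := Fintype.equivOfCardEq (by simp; omega)
  rw [expect_mul_extChar_one ε ((((isClassFun_hookSum k).comp _).mul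
    ((isClassFun_hookSum k).comp _)).mul ((isClassFun_extChar 1).comp _))]
  simp only [hookSum_permCongr, hookSum_sumCongr, extChar_permCongr, extChar_succ_sumCongr 0,
    zero_add, extChar_zero, Int.cast_add, Int.cast_one, mul_add, mul_one,
    Finset.expect_add_distrib]
  rw [expect_hookChar_mul_hookChar (by simp; omega),
    expect_hookChar_sq_mul_extChar_one hk (by simp; omega), Fintype.card_fin]
  split_ifs <;> first | omega | norm_num

lemma expect_nearHookChar_mul_self {k : ℕ} (hk : k ≠ 0) (hk' : k + 1 < Fintype.card α) :
    𝔼 g : Perm α, (nearHookChar k g : K) * nearHookChar k g =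
      if k + 2 = Fintype.card α then 0 else 1 := by
  have h_expand (g : Perm α) : (nearHookChar k g : K) * nearHookChar k g =
      (hookSum k g : K) * hookSum k g * extChar 1 g * extChar 1 g -
        2 * ((hookSum k g : K) * extChar (k + 1) g * extChar 1 g) +
        (extChar (k + 1) g : K) * extChar (k + 1) g := by
    simp only [nearHookChar]
    push_cast
    ring
  simp only [h_expand, Finset.expect_add_distrib, Finset.expect_sub_distrib, ← Finset.mul_expect]
  rw [expect_hookSum_sq_mul_extChar_one_sq hk hk', expect_hookSum_mul_extChar_mul_extChar_one hk',
    expect_extChar_mul_self (Nat.succ_ne_zero k) hk'.le, if_neg hk'.ne]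
  split_ifs <;> norm_num

end Restriction

section NormOne

open scoped ComplexConjugate

variable {ι : Type*} [Fintype ι]

lemma expect_normSq_sub_intCast_mul {χ : ι → ℂ} {h : ι → ℤ} {a : ℤ}
    (hχ : 𝔼 g, χ g * conj (χ g) = 1) (hh : 𝔼 g, (h g : ℂ) * h g = 1)
    (ha : 𝔼 g, χ g * h g = a) :
    𝔼 g, Complex.normSq (χ g - a * h g) = 1 - (a : ℝ) ^ 2 := by
  have ha_conj : 𝔼 g, conj (χ g) * h g = (a : ℂ) := by
    simpa [map_expect] using congrArg conj ha
  have h_expand (g : ι) : (Complex.normSq (χ g - a * h g) : ℂ) =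
      χ g * conj (χ g) - a * (χ g * h g) - a * (conj (χ g) * h g) +
        (a : ℂ) ^ 2 * (h g * h g) := by
    rw [← Complex.mul_conj]
    simp only [map_sub, map_mul, map_intCast]
    ring
  apply Complex.ofReal_injective
  rw [← Complex.ofRealHom_eq_coe, map_expect]
  simp only [Complex.ofRealHom_eq_coe, h_expand, Finset.expect_add_distrib,
    Finset.expect_sub_distrib, ← Finset.mul_expect, hχ, hh, ha, ha_conj]
  push_cast
  ring

lemma eq_intCast_mul_of_expect_mul_ne_zero {χ : ι → ℂ} {h : ι → ℤ} {a : ℤ}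
    (hχ : 𝔼 g, χ g * conj (χ g) = 1) (hh : 𝔼 g, (h g : ℂ) * h g = 1)
    (ha : 𝔼 g, χ g * h g = a) (ha0 : a ≠ 0) :
    (a = 1 ∨ a = -1) ∧ ∀ g, χ g = a * h g := by
  have h_norm := expect_normSq_sub_intCast_mul hχ hh ha
  have h_nonneg (g : ι) : 0 ≤ Complex.normSq (χ g - a * h g) := Complex.normSq_nonneg _
  have ha_sq : a ^ 2 ≤ 1 := by
    have : 0 ≤ 1 - (a : ℝ) ^ 2 := h_norm ▸ Finset.expect_nonneg fun g _ => h_nonneg g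
    exact_mod_cast sub_nonneg.mp this
  have ha_unit : a = 1 ∨ a = -1 := by
    have : |a| ≤ 1 := sq_le_one_iff_abs_le_one a |>.mp ha_sq
    rw [abs_le] at this
    omega
  refine ⟨ha_unit, fun g => ?_⟩
  have h_zero : 𝔼 g, Complex.normSq (χ g - a * h g) = 0 := by
    rcases ha_unit with rfl | rfl <;> rw [h_norm] <;> norm_num
  rw [Finset.expect_eq_zero_iff_of_nonneg fun g _ => h_nonneg g] at h_zero
  exact sub_eq_zero.mp (Complex.normSq_eq_zero.mp (h_zero g (Finset.mem_univ g)))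

lemma eq_zero_of_expect_mul_self_eq_zero {h : ι → ℤ} (hh : 𝔼 g, (h g : ℂ) * h g = 0) : h = 0 := by
  have hh' : 𝔼 g, (h g : ℚ) * h g = 0 := by
    have := map_expect (algebraMap ℚ ℂ) (fun g => (h g : ℚ) * h g) Finset.univ
    simpa [hh] using this
  rw [Finset.expect_eq_zero_iff_of_nonneg fun g _ => mul_self_nonneg _] at hh'
  ext g
  simpa using hh' g (Finset.mem_univ g)

end NormOne

section FullCycle

variable {α : Type*} [Fintype α] [DecidableEq α]

lemma hookChar_eq_coeff {g : Perm α} {q : ℤ[X]} (hq : permPoly g = (1 + X) * q) (k : ℕ) :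
    hookChar k g = q.coeff k := by
  induction k with
  | zero => simpa [hq, hookChar_zero] using (coeff_zero_permPoly g).symm
  | succ k ih => rw [hookChar_succ, ih, extChar, hq, add_mul, one_mul, coeff_add, coeff_X_mul,
      add_sub_cancel_right]

lemma sum_neg_one_pow_mul_hookChar {g : Perm α} {q : ℤ[X]} (hq : permPoly g = (1 + X) * q) :
    ∑ k ∈ Finset.range (Fintype.card α), (-1) ^ k * hookChar k g = q.eval (-1) := by
  have h_deg : (permPoly g).natDegree ≤ Fintype.card α :=
    natDegree_le_iff_coeff_eq_zero.mpr fun k hk => extChar_eq_zero_of_card_lt hk g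
  have hq0 : q ≠ 0 := by
    rintro rfl
    simpa [hq] using coeff_zero_permPoly g
  have h_monic : (1 + X : ℤ[X]).natDegree = 1 := by
    rw [add_comm]
    exact natDegree_X_add_C (1 : ℤ)
  rw [hq, natDegree_mul (fun h => by simp [h] at h_monic) hq0, h_monic] at h_deg
  rw [Polynomial.eval_eq_sum_range' (n := Fintype.card α) (by omega)]
  exact Finset.sum_congr rfl fun k _ => by rw [hookChar_eq_coeff hq, mul_comm]

lemma permPoly_eq_mul_subtypePerm (g : Perm α) {P : α → Prop} [DecidablePred P]
    (hP : ∀ z, P (g z) ↔ P z) :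
    permPoly g = permPoly (g.subtypePerm hP) *
      permPoly (g.subtypePerm (p := fun z => ¬ P z) fun z => not_congr (hP z)) := by
  rw [← permPoly_sumCongr, ← permPoly_permCongr (Equiv.sumCompl P)]
  congr 1
  ext z
  by_cases hz : P z
  · rw [Equiv.permCongr_apply, Equiv.sumCompl_symm_apply_of_pos hz]
    rfl
  · rw [Equiv.permCongr_apply, Equiv.sumCompl_symm_apply_of_neg hz]
    rfl

lemma sum_neg_one_pow_mul_hookChar_eq_zero {g : Perm α} {x y : α} (h : ¬ g.SameCycle x y) :
    ∑ k ∈ Finset.range (Fintype.card α), (-1) ^ k * hookChar k g = 0 := by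
  classical
  have : Nonempty {z // g.SameCycle x z} := ⟨⟨x, Perm.SameCycle.refl g x⟩⟩
  have : Nonempty {z // ¬ g.SameCycle x z} := ⟨⟨y, h⟩⟩
  have h_split := permPoly_eq_mul_subtypePerm g (P := g.SameCycle x)
    fun z => Perm.sameCycle_apply_right
  obtain ⟨u, hu⟩ := one_add_X_dvd_permPoly (g.subtypePerm (p := g.SameCycle x) _)
  obtain ⟨v, hv⟩ := one_add_X_dvd_permPoly (g.subtypePerm (p := fun z => ¬ g.SameCycle x z) _)
  rw [sum_neg_one_pow_mul_hookChar (q := u * ((1 + X) * v)) (by rw [h_split, hu, hv]; ring)]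
  simp

lemma isConj_finRotate {n : ℕ} (hn : 2 ≤ n) {g : Perm (Fin n)}
    (h : ∀ x y, g.SameCycle x y) : IsConj (finRotate n) g := by
  have : Nontrivial (Fin n) := Fin.nontrivial_iff_two_le.mpr hn
  have h_move (x : Fin n) : g x ≠ x := fun hx => by
    obtain ⟨y, hy⟩ := exists_ne x
    exact hy ((h x y).eq_of_left hx).symm
  have h_cycle : g.IsCycle := ⟨⟨0, by omega⟩, h_move _, fun y _ => h _ y⟩
  have h_supp : g.support = Finset.univ := by
    ext x
    simp [h_move x]
  rw [Perm.isConj_iff_cycleType_eq, cycleType_finRotate_of_le hn, h_cycle.cycleType, h_supp,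
    Finset.card_univ, Fintype.card_fin]

lemma expect_sum_neg_one_pow_mul_hookChar [Nonempty α] {K : Type*} [Field K] [CharZero K] :
    𝔼 g : Perm α, ∑ k ∈ Finset.range (Fintype.card α), (-1) ^ k * (hookChar k g : K) = 1 := by
  have h_trivial (k : ℕ) : 𝔼 g : Perm α, (hookChar k g : K) = if k = 0 then 1 else 0 := by
    simpa only [hookChar_zero, Int.cast_one, one_mul] using
      expect_hookChar_mul_hookChar (K := K) (α := α) Fintype.card_pos k
  simp [Finset.expect_sum_comm, ← Finset.mul_expect, h_trivial]

lemma exists_expect_mul_hookChar_ne_zero {K : Type*} [Field K] [CharZero K] {n : ℕ} (hn : 2 ≤ n)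
    {χ : Perm (Fin n) → K} (hχ : IsClassFun χ) (h0 : χ (finRotate n) ≠ 0) :
    ∃ k < n, 𝔼 g, χ g * hookChar k g ≠ 0 := by
  have : Nonempty (Fin n) := ⟨⟨0, by omega⟩⟩
  set s : Perm (Fin n) → K := fun g => ∑ k ∈ Finset.range n, (-1) ^ k * (hookChar k g : K)
  have h_point (g : Perm (Fin n)) : χ g * s g = χ (finRotate n) * s g := by
    by_cases hg : ∀ x y, g.SameCycle x y
    · obtain ⟨c, rfl⟩ := isConj_iff.mp (isConj_finRotate hn hg)
      rw [hχ]
    · push Not at hg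
      obtain ⟨x, y, hxy⟩ := hg
      have hs : s g = 0 := by
        have := sum_neg_one_pow_mul_hookChar_eq_zero hxy
        rw [Fintype.card_fin] at this
        simpa [s] using congrArg (Int.cast : ℤ → K) this
      rw [hs, mul_zero, mul_zero]
  have h_value : 𝔼 g, χ g * s g = χ (finRotate n) := by
    simp only [h_point, ← Finset.mul_expect]
    have := expect_sum_neg_one_pow_mul_hookChar (K := K) (α := Fin n)
    rw [Fintype.card_fin] at this
    rw [this, mul_one]
  by_contra! h_zero
  refine h0 (h_value.symm.trans ?_)
  simp only [s, Finset.mul_sum, Finset.expect_sum_comm, mul_left_comm (χ _), ← Finset.mul_expect]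
  exact Finset.sum_eq_zero fun k hk => by rw [h_zero k (Finset.mem_range.mp hk), mul_zero]

end FullCycle

section CharacterConj

open scoped ComplexOrder ComplexConjugate

variable {G : Type*} [Group G] [Finite G]

lemma exists_posDef_conjTranspose_mul_mul_eq {ι 𝕜 : Type*} [Fintype ι] [DecidableEq ι] [RCLike 𝕜]
    (M : G →* Matrix ι ι 𝕜) : ∃ H : Matrix ι ι 𝕜, H.PosDef ∧ ∀ g, (M g)ᴴ * H * M g = H := by
  classical
  have := Fintype.ofFinite G
  refine ⟨∑ h, (M h)ᴴ * M h, ?_, fun g => ?_⟩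
  · rw [← Finset.add_sum_erase _ _ (Finset.mem_univ (1 : G))]
    refine Matrix.PosDef.add_posSemidef ?_ ?_
    · simpa using Matrix.PosDef.one
    · exact Matrix.posSemidef_sum _ fun h _ => Matrix.posSemidef_conjTranspose_mul_self _
  · rw [Finset.mul_sum, Finset.sum_mul,
      ← Equiv.sum_comp (Equiv.mulRight g) (fun h => (M h)ᴴ * M h)]
    refine Finset.sum_congr rfl fun h _ => ?_
    simp only [Equiv.coe_mulRight, map_mul, conjTranspose_mul, Matrix.mul_assoc]

lemma trace_map_inv_eq_star {ι 𝕜 : Type*} [Fintype ι] [DecidableEq ι] [RCLike 𝕜]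
    (M : G →* Matrix ι ι 𝕜) (g : G) : (M g⁻¹).trace = star (M g).trace := by
  obtain ⟨H, hH, h_inv⟩ := exists_posDef_conjTranspose_mul_mul_eq M
  have h_det : IsUnit H.det := (Matrix.isUnit_iff_isUnit_det _).mp hH.isUnit
  have h_cancel : M g * M g⁻¹ = 1 := by rw [← map_mul, mul_inv_cancel, map_one]
  have h_star : (M g)ᴴ = H * M g⁻¹ * H⁻¹ := by
    rw [← h_inv g, Matrix.mul_assoc ((M g)ᴴ * H), h_cancel, Matrix.mul_one, h_inv,
      Matrix.mul_nonsing_inv_cancel_right _ _ h_det]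
  rw [← Matrix.trace_conjTranspose, h_star, Matrix.trace_mul_comm,
    Matrix.nonsing_inv_mul_cancel_left _ _ h_det]

lemma character_inv_eq_conj {V : Type*} [AddCommGroup V] [Module ℂ V] [FiniteDimensional ℂ V]
    (ρ : Representation ℂ G V) (g : G) : ρ.character g⁻¹ = conj (ρ.character g) := by
  let b := Module.finBasis ℂ V
  have h_trace (g : G) : ρ.character g = (LinearMap.toMatrixAlgEquiv b (ρ g)).trace :=
    LinearMap.trace_eq_matrix_trace ℂ b (ρ g)
  rw [h_trace, h_trace]
  exact trace_map_inv_eq_star ((LinearMap.toMatrixAlgEquiv b).toMonoidHom.comp ρ) g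

end CharacterConj

section Integrality

variable {α β γ K V : Type*} [Field K] [AddCommGroup V] [Module K V]

lemma isClassFun_character {G : Type*} [Group G] (ρ : Representation K G V) :
    IsClassFun ρ.character := ρ.char_conj

/-- The inclusion of the Young subgroup `Perm α × Perm β` into the symmetric group of
`γ ≃ α ⊕ β`. -/
def youngHom (ε : α ⊕ β ≃ γ) : Perm α × Perm β →* Perm γ :=
  ε.permCongrHom.toMonoidHom.comp (Perm.sumCongrHom α β)

lemma youngHom_apply (ε : α ⊕ β ≃ γ) (x : Perm α × Perm β) :
    youngHom ε x = ε.permCongr (Equiv.sumCongr x.1 x.2) := rfl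

variable [Fintype α] [DecidableEq α]

/-- The restriction of `ρ` to a Young subgroup, twisted by the sign of the first factor; its
invariants are counted by the multiplicities in `extChar`. -/
noncomputable def signTwist (ρ : Representation K (Perm γ) V) (ε : α ⊕ β ≃ γ) :
    Representation K (Perm α × Perm β) V where
  toFun x := ((Perm.sign x.1 : ℤ) : K) • ρ (youngHom ε x)
  map_one' := by simp
  map_mul' x y := by
    simp only [map_mul, Prod.fst_mul, Units.val_mul, Int.cast_mul, smul_mul_smul_comm]

lemma character_signTwist (ρ : Representation K (Perm γ) V) (ε : α ⊕ β ≃ γ)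
    (x : Perm α × Perm β) : (signTwist ρ ε).character x =
      (Perm.sign x.1 : ℤ) * ρ.character (ε.permCongr (Equiv.sumCongr x.1 x.2)) := by
  simp [Representation.character, signTwist, youngHom_apply]

variable [CharZero K]

lemma expect_character_eq_finrank_invariants {G : Type*} [Group G] [Fintype G]
    (ρ : Representation K G V) [FiniteDimensional K V] :
    𝔼 g, ρ.character g = Module.finrank K ρ.invariants := by
  have : Invertible (Nat.card G : K) := invertibleOfNonzero (by exact_mod_cast Nat.card_pos.ne')
  rw [Fintype.expect_eq_sum_div_card, ← ρ.card_inv_mul_sum_char_eq_finrank,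
    Nat.card_eq_fintype_card, div_eq_inv_mul]

variable [FiniteDimensional K V] [Fintype γ] [DecidableEq γ]

lemma exists_int_expect_character_mul_extChar (ρ : Representation K (Perm γ) V) (k : ℕ) :
    ∃ a : ℤ, 𝔼 g, ρ.character g * extChar k g = a := by
  obtain h | h := lt_or_ge (Fintype.card γ) k
  · exact ⟨0, by simp [extChar_eq_zero_of_card_lt h]⟩
  · have ε : Fin k ⊕ Fin (Fintype.card γ - k) ≃ γ := Fintype.equivOfCardEq (by simp; omega)
    refine ⟨Module.finrank K (signTwist ρ ε).invariants, ?_⟩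
    rw [Int.cast_natCast, ← expect_character_eq_finrank_invariants,
      expect_mul_extChar ε (isClassFun_character ρ), ← Finset.univ_product_univ,
      Finset.expect_product]
    simp only [character_signTwist, Finset.mul_expect]

lemma exists_int_expect_character_mul_hookChar (ρ : Representation K (Perm γ) V) (k : ℕ) :
    ∃ a : ℤ, 𝔼 g, ρ.character g * hookChar k g = a := by
  induction k with
  | zero => simpa only [hookChar_zero, extChar_zero] using
      exists_int_expect_character_mul_extChar ρ 0
  | succ k ih =>
    obtain ⟨a, ha⟩ := ih
    obtain ⟨b, hb⟩ := exists_int_expect_character_mul_extChar ρ (k + 1)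
    exact ⟨b - a, by
      simp only [hookChar_succ, Int.cast_sub, mul_sub, Finset.expect_sub_distrib, ha, hb]⟩

lemma exists_int_expect_character_mul_nearHookChar [Nonempty γ] (ρ : Representation K (Perm γ) V)
    (k : ℕ) : ∃ a : ℤ, 𝔼 g, ρ.character g * nearHookChar k g = a := by
  have h_card : Fintype.card γ ≠ 0 := Fintype.card_ne_zero
  have ε : Fin 1 ⊕ Fin (Fintype.card γ - 1) ≃ γ := Fintype.equivOfCardEq (by simp; omega)
  obtain ⟨a, ha⟩ := exists_int_expect_character_mul_extChar ρ (k + 1)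
  obtain ⟨b, hb⟩ := exists_int_expect_character_mul_hookChar
    (ρ.comp ((youngHom ε).comp (MonoidHom.inr _ _))) k
  have h_restrict : 𝔼 g, ρ.character g * hookSum k g * extChar 1 g = b := by
    rw [expect_mul_extChar_one ε
      ((isClassFun_character ρ).mul ((isClassFun_hookSum k).comp Int.cast))]
    simp only [hookSum_permCongr, hookSum_sumCongr]
    exact hb
  refine ⟨b - a, ?_⟩
  rw [Int.cast_sub, ← ha, ← h_restrict, ← Finset.expect_sub_distrib]
  refine Finset.expect_congr rfl fun g _ => ?_
  rw [nearHookChar]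
  push_cast
  ring

end Integrality

section CycleTypes

variable {n p : ℕ}

lemma not_dvd_orderOf_of_pow_eq_one {G : Type*} [Monoid G] {g : G} {m : ℕ} (h : g ^ m = 1)
    (hm : ¬ p ∣ m) : ¬ p ∣ orderOf g :=
  fun hp => hm (hp.trans (orderOf_dvd_of_pow_eq_one h))

lemma not_dvd_orderOf_finRotate {a : ℕ} (h : ¬ p ∣ a) : ¬ p ∣ orderOf (finRotate a) := by
  refine not_dvd_orderOf_of_pow_eq_one (m := a) ?_ h
  obtain ha | ha := lt_or_ge a 2
  · have : Subsingleton (Fin a) := Fin.subsingleton_iff_le_one.mpr (by omega)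
    exact Subsingleton.elim _ _
  · have h_order := (isCycle_finRotate_of_le ha).orderOf
    rw [support_finRotate_of_le ha, Finset.card_univ, Fintype.card_fin] at h_order
    exact orderOf_dvd_iff_pow_eq_one.mp h_order.dvd

lemma not_dvd_orderOf_sumCongr {α β γ : Type*} (ε : α ⊕ β ≃ γ) (hp : p.Prime) {g₁ : Perm α}
    {g₂ : Perm β} (h₁ : ¬ p ∣ orderOf g₁) (h₂ : ¬ p ∣ orderOf g₂) :
    ¬ p ∣ orderOf (ε.permCongr (Equiv.sumCongr g₁ g₂)) := by
  refine not_dvd_orderOf_of_pow_eq_one (m := orderOf g₁ * orderOf g₂) ?_ (hp.not_dvd_mul h₁ h₂)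
  rw [← youngHom_apply ε (g₁, g₂), ← map_pow, Prod.pow_mk, pow_mul, pow_mul',
    pow_orderOf_eq_one, pow_orderOf_eq_one, one_pow, one_pow, ← Prod.one_eq_mk, map_one]

lemma exists_permPoly_eq_prod (hp : p.Prime) {l : List ℕ} (hl : ∀ a ∈ l, ¬ p ∣ a)
    (hn : l.sum = n) : ∃ g : Perm (Fin n), ¬ p ∣ orderOf g ∧
      permPoly g = (l.map fun a => (1 - (-X) ^ a : ℤ[X])).prod := by
  induction l generalizing n with
  | nil =>
    obtain rfl : n = 0 := hn.symm
    exact ⟨1, by simpa using hp.one_lt.ne', by simp [permPoly_one]⟩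
  | cons a l ih =>
    obtain ⟨g, hg, hg'⟩ := ih (fun b hb => hl b (List.mem_cons_of_mem a hb)) rfl
    have ha : ¬ p ∣ a := hl a List.mem_cons_self
    have ha0 : a ≠ 0 := fun h => ha (h ▸ dvd_zero p)
    have ε : Fin a ⊕ Fin l.sum ≃ Fin n := Fintype.equivOfCardEq (by simpa using hn)
    refine ⟨ε.permCongr (Equiv.sumCongr (finRotate a) g),
      not_dvd_orderOf_sumCongr _ hp (not_dvd_orderOf_finRotate ha) hg, ?_⟩
    rw [permPoly_permCongr, permPoly_sumCongr, hg', List.map_cons, List.prod_cons,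
      permPoly_finRotate ha0]

lemma coeff_one_sub_neg_X_pow {a k : ℕ} (hk : k ≠ 0) (hka : k ≠ a) :
    (1 - (-X) ^ a : ℤ[X]).coeff k = 0 := by
  rw [neg_pow, ← C_1, ← C_neg, ← C_pow, coeff_sub, coeff_C_mul_X_pow, if_neg hka, C_1, coeff_one,
    if_neg hk, sub_zero]

lemma coeff_one_sub_neg_X_pow_mul {a b k : ℕ} (hk : k ≠ 0) (hka : k ≠ a) (hkb : k ≠ b)
    (hkab : k ≠ a + b) : ((1 - (-X) ^ a) * (1 - (-X) ^ b) : ℤ[X]).coeff k = 0 := by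
  have h_expand : ((1 - (-X) ^ a) * (1 - (-X) ^ b) : ℤ[X]) =
      (1 - (-X) ^ a) + (1 - (-X) ^ b) - (1 - (-X) ^ (a + b)) := by
    rw [pow_add]
    ring
  rw [h_expand, coeff_sub, coeff_add, coeff_one_sub_neg_X_pow hk hka,
    coeff_one_sub_neg_X_pow hk hkb, coeff_one_sub_neg_X_pow hk hkab, add_zero, sub_zero]

lemma exists_hookChar_eq_zero_of_cycles (hp : p.Prime) {a b k : ℕ} (ha : ¬ p ∣ a) (hb : ¬ p ∣ b)
    (hn : a + b + 1 = n) (hk : k ≠ 0) (hka : k ≠ a) (hkb : k ≠ b) (hkab : k ≠ a + b) :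
    ∃ g : Perm (Fin n), ¬ p ∣ orderOf g ∧ hookChar k g = 0 := by
  obtain ⟨g, hg, hg'⟩ := exists_permPoly_eq_prod (l := [1, a, b]) (n := n) hp
    (by simpa using ⟨hp.one_lt.ne', ha, hb⟩) (by simp; omega)
  refine ⟨g, hg, ?_⟩
  rw [hookChar_eq_coeff (q := (1 - (-X) ^ a) * (1 - (-X) ^ b)) (by simpa using hg'),
    coeff_one_sub_neg_X_pow_mul hk hka hkb hkab]

lemma exists_nearHookChar_eq_zero_of_cycles (hp : p.Prime) {a b k : ℕ} (ha : ¬ p ∣ a)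
    (hb : ¬ p ∣ b) (hn : a + b = n) (ha1 : a ≠ 1) (hb1 : b ≠ 1) (hka : k + 1 ≠ a)
    (hkb : k + 1 ≠ b) (hkab : k + 1 ≠ n) :
    ∃ g : Perm (Fin n), ¬ p ∣ orderOf g ∧ nearHookChar k g = 0 := by
  have ha0 : a ≠ 0 := fun h => ha (h ▸ dvd_zero p)
  obtain ⟨g, hg, hg'⟩ := exists_permPoly_eq_prod (l := [a, b]) (n := n) hp
    (by simpa using ⟨ha, hb⟩) (by simpa using hn)
  rw [List.map_cons, List.map_singleton, List.prod_pair] at hg'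
  refine ⟨g, hg, ?_⟩
  rw [nearHookChar, extChar, extChar, hg', coeff_one_sub_neg_X_pow_mul, coeff_one_sub_neg_X_pow_mul]
    <;> omega

lemma not_dvd_two_or_not_dvd_three (hp : p.Prime) : ¬ p ∣ 2 ∨ ¬ p ∣ 3 := by
  by_contra! h
  exact hp.one_lt.ne' (Nat.dvd_one.mp ((Nat.dvd_add_right h.1).mp h.2))

lemma not_dvd_sub_one_of_dvd (hp : p.Prime) (hn : 1 ≤ n) (hpn : p ∣ n) : ¬ p ∣ n - 1 := fun h =>
  hp.one_lt.ne' (Nat.dvd_one.mp ((Nat.dvd_sub_iff_right hn hpn).mp h))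

lemma exists_hookChar_eq_zero (hp : p.Prime) (hn : 7 ≤ n) {k : ℕ} (hk : k ≠ 0)
    (hkn : k + 2 ≤ n) : ∃ g : Perm (Fin n), ¬ p ∣ orderOf g ∧ hookChar k g = 0 := by
  have hp1 : ¬ p ∣ 1 := hp.one_lt.ne' ∘ Nat.dvd_one.mp
  by_cases hpn : p ∣ n - 1
  · have h_cycles (m : ℕ) (hm : ¬ p ∣ m) (hmn : m + 1 ≤ n) (hkm : k ≠ m) (hkm' : k + m + 1 ≠ n) :
        ∃ g : Perm (Fin n), ¬ p ∣ orderOf g ∧ hookChar k g = 0 := by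
      have h_compl : ¬ p ∣ n - 1 - m := fun h => hm ((Nat.dvd_sub_iff_right (by omega) hpn).mp h)
      refine exists_hookChar_eq_zero_of_cycles hp h_compl hm ?_ hk ?_ hkm ?_ <;> omega
    by_cases hk' : k = 1 ∨ k + 2 = n
    · obtain h2 | h3 := not_dvd_two_or_not_dvd_three hp
      · exact h_cycles 2 h2 (by omega) (by omega) (by omega)
      · exact h_cycles 3 h3 (by omega) (by omega) (by omega)
    · exact h_cycles 1 hp1 (by omega) (by omega) (by omega)
  · obtain ⟨g, hg, hg'⟩ := exists_permPoly_eq_prod (l := [1, n - 1]) (n := n) hp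
      (by simpa using ⟨hp.one_lt.ne', hpn⟩) (by simp; omega)
    refine ⟨g, hg, ?_⟩
    rw [hookChar_eq_coeff (q := 1 - (-X) ^ (n - 1)) (by simpa using hg'),
      coeff_one_sub_neg_X_pow hk (by omega)]

lemma exists_nearHookChar_eq_zero (hp : p.Prime) (hn : 9 ≤ n) (hpn : p ∣ n) {k : ℕ}
    (hkn : k + 1 ≠ n) : ∃ g : Perm (Fin n), ¬ p ∣ orderOf g ∧ nearHookChar k g = 0 := by
  have h_cycles (m : ℕ) (hm : ¬ p ∣ m) (hm1 : m ≠ 1) (hmn : m + 1 < n) (hkm : k + 1 ≠ m)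
      (hkm' : k + 1 + m ≠ n) : ∃ g : Perm (Fin n), ¬ p ∣ orderOf g ∧ nearHookChar k g = 0 := by
    have h_compl : ¬ p ∣ n - m := fun h => hm ((Nat.dvd_sub_iff_right (by omega) hpn).mp h)
    refine exists_nearHookChar_eq_zero_of_cycles hp h_compl hm ?_ ?_ hm1 ?_ hkm hkn <;> omega
  obtain rfl | h_odd := hp.eq_two_or_odd
  · by_cases hk : k + 1 = 3 ∨ k + 1 + 3 = n
    · exact h_cycles 5 (by omega) (by omega) (by omega) (by omega) (by omega)
    · exact h_cycles 3 (by omega) (by omega) (by omega) (by omega) (by omega)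
  · have hp2 : ¬ p ∣ 2 := fun h => by
      rw [(Nat.prime_dvd_prime_iff_eq hp Nat.prime_two).mp h] at h_odd
      omega
    by_cases hk : k + 1 = 2 ∨ k + 1 + 2 = n
    · exact h_cycles 4 (hp.not_dvd_mul hp2 hp2) (by omega) (by omega) (by omega) (by omega)
    · exact h_cycles 2 hp2 (by omega) (by omega) (by omega) (by omega)

end CycleTypes

section SymmetricGroup

open scoped ComplexConjugate

lemma expect_character_mul_conj_self {G V : Type*} [Group G] [Fintype G] [AddCommGroup V]
    [Module ℂ V] [FiniteDimensional ℂ V] (ρ : Representation ℂ G V) [ρ.IsIrreducible] :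
    𝔼 g, ρ.character g * conj (ρ.character g) = 1 := by
  have : Invertible (Nat.card G : ℂ) := invertibleOfNonzero (by exact_mod_cast Nat.card_pos.ne')
  have h_norm := Representation.char_orthonormal ρ ρ
  rw [if_pos ⟨.refl ρ⟩, Nat.card_eq_fintype_card, ← div_eq_inv_mul,
    ← Fintype.expect_eq_sum_div_card] at h_norm
  simpa only [character_inv_eq_conj] using h_norm

variable {n p : ℕ} {V : Type*} [AddCommGroup V] [Module ℂ V] [FiniteDimensional ℂ V]

lemma exists_character_eq_intCast_mul {G : Type*} [Group G] [Fintype G]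
    (ρ : Representation ℂ G V) [ρ.IsIrreducible] {h : G → ℤ}
    (hh : 𝔼 g, (h g : ℂ) * h g = 1) (h_int : ∃ a : ℤ, 𝔼 g, ρ.character g * h g = a)
    (h_ne : 𝔼 g, ρ.character g * h g ≠ 0) :
    ∃ a : ℤ, (a = 1 ∨ a = -1) ∧ ∀ g, ρ.character g = a * h g := by
  obtain ⟨a, ha⟩ := h_int
  have ha0 : a ≠ 0 := by
    rintro rfl
    exact h_ne (by simpa using ha)
  exact ⟨a, eq_intCast_mul_of_expect_mul_ne_zero (expect_character_mul_conj_self ρ) hh ha ha0⟩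

lemma hookChar_apply_one {α : Type*} [Fintype α] [DecidableEq α] [Nonempty α] (k : ℕ) :
    hookChar k (1 : Perm α) = (Fintype.card α - 1).choose k := by
  rw [hookChar_eq_coeff (q := (1 + X) ^ (Fintype.card α - 1)), coeff_one_add_X_pow]
  rw [permPoly_one, ← pow_succ', Nat.sub_add_cancel Fintype.card_pos]

lemma exists_character_eq_zero_of_expect_mul_hookChar_ne_zero (hp : p.Prime) (hn : 7 ≤ n)
    (ρ : Representation ℂ (Perm (Fin n)) V) [ρ.IsIrreducible]
    (hdim : Module.finrank ℂ V ≠ 1) {k : ℕ} (hk : k < n)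
    (h_ne : 𝔼 g, ρ.character g * hookChar k g ≠ 0) :
    ∃ g, ¬ p ∣ orderOf g ∧ ρ.character g = 0 := by
  have h_norm : 𝔼 g : Perm (Fin n), (hookChar k g : ℂ) * hookChar k g = 1 := by
    rw [expect_hookChar_mul_hookChar (by simpa using hk), if_pos rfl]
  obtain ⟨a, ha, hρ⟩ := exists_character_eq_intCast_mul ρ h_norm
    (exists_int_expect_character_mul_hookChar ρ k) h_ne
  have hk_inner : k ≠ 0 ∧ k + 2 ≤ n := by
    by_contra hk_end
    have : Nonempty (Fin n) := ⟨⟨k, hk⟩⟩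
    have h_choose : (n - 1).choose k = 1 := by
      obtain rfl | rfl : k = 0 ∨ k = n - 1 := by omega
      · exact Nat.choose_zero_right _
      · exact Nat.choose_self _
    have h_one := hρ 1
    rw [ρ.char_one, hookChar_apply_one, Fintype.card_fin, h_choose, Nat.cast_one, Int.cast_one,
      mul_one] at h_one
    have h_dim : (Module.finrank ℂ V : ℤ) = a := by exact_mod_cast h_one
    omega
  obtain ⟨g, hg, hg0⟩ := exists_hookChar_eq_zero hp hn hk_inner.1 hk_inner.2
  exact ⟨g, hg, by rw [hρ, hg0, Int.cast_zero, mul_zero]⟩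

lemma nearHookChar_zero {α : Type*} [Fintype α] [DecidableEq α] (g : Perm α) :
    nearHookChar 0 g = 0 := by
  rw [nearHookChar, hookSum_zero, mul_one, zero_add, sub_self]

lemma expect_nearHookChar_mul_self_eq_one_of_ne_zero {k : ℕ} (hk : k + 1 < n)
    {g : Perm (Fin n)} (hg : nearHookChar k g ≠ 0) :
    𝔼 g : Perm (Fin n), (nearHookChar k g : ℂ) * nearHookChar k g = 1 := by
  have hk0 : k ≠ 0 := by
    rintro rfl
    exact hg (nearHookChar_zero g)
  have h_norm := expect_nearHookChar_mul_self (K := ℂ) (α := Fin n) hk0 (by simpa using hk)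
  split_ifs at h_norm with h_end
  · exact absurd (congrFun (eq_zero_of_expect_mul_self_eq_zero h_norm) g) hg
  · exact h_norm

lemma exists_character_eq_zero_of_expect_mul_nearHookChar_ne_zero (hp : p.Prime) (hn : 9 ≤ n)
    (hpn : p ∣ n) (ρ : Representation ℂ (Perm (Fin n)) V) [ρ.IsIrreducible] {k : ℕ}
    (hk : k + 1 < n) (h_ne : 𝔼 g, ρ.character g * nearHookChar k g ≠ 0) :
    ∃ g, ¬ p ∣ orderOf g ∧ ρ.character g = 0 := by
  have : Nonempty (Fin n) := ⟨⟨k, by omega⟩⟩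
  obtain ⟨x, -, hx⟩ := Finset.exists_ne_zero_of_expect_ne_zero h_ne
  have hx' : nearHookChar k x ≠ 0 := fun h => hx (by rw [h, Int.cast_zero, mul_zero])
  obtain ⟨a, -, hρ⟩ := exists_character_eq_intCast_mul ρ
    (expect_nearHookChar_mul_self_eq_one_of_ne_zero hk hx')
    (exists_int_expect_character_mul_nearHookChar ρ k) h_ne
  obtain ⟨g, hg, hg0⟩ := exists_nearHookChar_eq_zero hp hn hpn hk.ne
  exact ⟨g, hg, by rw [hρ, hg0, Int.cast_zero, mul_zero]⟩

lemma exists_expect_mul_hookChar_or_nearHookChar_ne_zero {K : Type*} [Field K] [CharZero K]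
    {m : ℕ} (hm : 2 ≤ m) (ε : Fin 1 ⊕ Fin m ≃ Fin n) {χ : Perm (Fin n) → K} (hχ : IsClassFun χ)
    (h0 : χ (ε.permCongr (Equiv.sumCongr 1 (finRotate m))) ≠ 0) :
    (∃ k < n, 𝔼 g, χ g * hookChar k g ≠ 0) ∨
      ∃ k, k + 1 < n ∧ 𝔼 g, χ g * nearHookChar k g ≠ 0 := by
  have hmn : m + 1 = n := by simpa [add_comm] using Fintype.card_congr ε
  obtain ⟨k, hk, h_ne⟩ := exists_expect_mul_hookChar_ne_zero hm
    (hχ.comp_monoidHom ((youngHom ε).comp (MonoidHom.inr _ _))) h0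
  have h_restrict : 𝔼 g, χ g * hookSum k g * extChar 1 g =
      𝔼 b, χ (ε.permCongr (Equiv.sumCongr 1 b)) * hookChar k b := by
    rw [expect_mul_extChar_one ε (hχ.mul ((isClassFun_hookSum k).comp Int.cast))]
    simp only [hookSum_permCongr, hookSum_sumCongr]
  have h_decomp : 𝔼 g, χ g * hookSum k g * extChar 1 g = 𝔼 g, χ g * nearHookChar k g +
      𝔼 g, χ g * hookChar k g + 𝔼 g, χ g * hookChar (k + 1) g := by
    rw [← Finset.expect_add_distrib, ← Finset.expect_add_distrib]
    refine Finset.expect_congr rfl fun g _ => ?_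
    have := congrArg (Int.cast : ℤ → K) (extChar_one_mul_hookSum k g)
    push_cast at this
    linear_combination χ g * this
  by_contra! h
  refine h_ne (h_restrict.symm.trans (h_decomp.trans ?_))
  rw [h.2 k (by omega), h.1 k (by omega), h.1 (k + 1) (by omega), add_zero, add_zero]

theorem exists_character_eq_zero_of_perm (hp : p.Prime) (hn : 9 ≤ n)
    (ρ : Representation ℂ (Perm (Fin n)) V) [ρ.IsIrreducible] (hdim : Module.finrank ℂ V ≠ 1) :
    ∃ g, ¬ p ∣ orderOf g ∧ ρ.character g = 0 := by
  by_cases hpn : p ∣ n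
  · have ε : Fin 1 ⊕ Fin (n - 1) ≃ Fin n := Fintype.equivOfCardEq (by simp; omega)
    by_cases h0 : ρ.character (ε.permCongr (Equiv.sumCongr 1 (finRotate (n - 1)))) = 0
    · exact ⟨_, not_dvd_orderOf_sumCongr ε hp (by simpa using hp.one_lt.ne')
        (not_dvd_orderOf_finRotate (not_dvd_sub_one_of_dvd hp (by omega) hpn)), h0⟩
    obtain ⟨k, hk, h_ne⟩ | ⟨k, hk, h_ne⟩ := exists_expect_mul_hookChar_or_nearHookChar_ne_zero
      (by omega) ε (isClassFun_character ρ) h0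
    · exact exists_character_eq_zero_of_expect_mul_hookChar_ne_zero hp (by omega) ρ hdim hk h_ne
    · exact exists_character_eq_zero_of_expect_mul_nearHookChar_ne_zero hp hn hpn ρ hk h_ne
  · by_cases h0 : ρ.character (finRotate n) = 0
    · exact ⟨_, not_dvd_orderOf_finRotate hpn, h0⟩
    · obtain ⟨k, hk, h_ne⟩ := exists_expect_mul_hookChar_ne_zero (by omega)
        (isClassFun_character ρ) h0
      exact exists_character_eq_zero_of_expect_mul_hookChar_ne_zero hp (by omega) ρ hdim hk h_ne

end SymmetricGroup

end SymmetricGroupCharacters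

section WreathProduct

open Equiv SemidirectProduct Representation
open scoped MonoidAlgebra

section IrreducibleRepresentations

variable {K G V : Type*} [Field K] [Monoid G] [AddCommGroup V] [Module K V]
  {ρ : Representation K G V}

lemma isIrreducible_of_forall_eq_bot_or_eq_top [Nontrivial V]
    (h : ∀ W : Subrepresentation ρ, W.toSubmodule = ⊥ ∨ W.toSubmodule = ⊤) : ρ.IsIrreducible where
  exists_pair_ne := ⟨⊥, ⊤, fun h_eq => bot_ne_top (congrArg Subrepresentation.toSubmodule h_eq)⟩
  eq_bot_or_eq_top W := (h W).imp (fun h_bot => Subrepresentation.toSubmodule_injective h_bot)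
    fun h_top => Subrepresentation.toSubmodule_injective h_top

lemma exists_eq_smul_one_of_commute [IsAlgClosed K] [FiniteDimensional K V] [ρ.IsIrreducible]
    {f : V →ₗ[K] V} (hf : ∀ g, Commute f (ρ g)) : ∃ c : K, f = c • 1 := by
  obtain ⟨c, hc⟩ :=
    (IsIrreducible.algebraMap_intertwiningMap_bijective_of_isAlgClosed (ρ := ρ)).2
      ⟨f, fun g => (hf g).eq⟩
  exact ⟨c, LinearMap.ext fun v => (congrArg (fun t : ρ.IntertwiningMap ρ => t v) hc).symm⟩

lemma exists_apply_apply_ne_zero [ρ.IsIrreducible] {f : V →ₗ[K] V} {u v : V} (hu : u ≠ 0)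
    (hv : f v ≠ 0) : ∃ g, f (ρ g u) ≠ 0 := by
  by_contra! h
  let W : Subrepresentation ρ :=
    { toSubmodule := ⨅ g, LinearMap.ker (f ∘ₗ ρ g)
      apply_mem_toSubmodule := fun g w hw => by
        simp only [Submodule.mem_iInf, LinearMap.mem_ker, LinearMap.comp_apply] at hw ⊢
        intro k
        rw [← Module.End.mul_apply (ρ k), ← map_mul, hw] }
  have h_mem (w : V) : w ∈ W ↔ ∀ g, f (ρ g w) = 0 := by
    change w ∈ (⨅ g, LinearMap.ker (f ∘ₗ ρ g)) ↔ _
    simp only [Submodule.mem_iInf, LinearMap.mem_ker, LinearMap.comp_apply]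
  obtain h_bot | h_top := eq_bot_or_eq_top W
  · have hu_mem : u ∈ (⊥ : Subrepresentation ρ) := h_bot ▸ (h_mem u).mpr h
    exact hu hu_mem
  · have hv_mem : v ∈ W := h_top ▸ Submodule.mem_top
    exact hv (by simpa using (h_mem v).mp hv_mem 1)

lemma isIrreducible_of_simple {k : Type*} {G : Type*} [Field k] [Monoid G] (V : FDRep k G)
    [Simple V] : IsIrreducible (V.ρ : Representation k G V) := by
  have : Nontrivial V := by
    by_contra h
    rw [not_nontrivial_iff_subsingleton] at h
    refine Simple.not_isZero V ((Limits.IsZero.iff_id_eq_zero V).mpr ?_)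
    ext v
    exact Subsingleton.elim _ _
  refine isIrreducible_of_forall_eq_bot_or_eq_top fun W => ?_
  let incl : FDRep.of W.toRepresentation ⟶ V :=
    ⟨FGModuleCat.ofHom W.toSubmodule.subtype, fun g => rfl⟩
  have : Mono incl := ConcreteCategory.mono_of_injective incl W.toSubmodule.injective_subtype
  by_cases h : incl = 0
  · refine Or.inl ((Submodule.eq_bot_iff _).mpr fun w hw => ?_)
    exact ConcreteCategory.congr_hom h (⟨w, hw⟩ : W.toSubmodule)
  · have := isIso_of_mono_of_nonzero h
    exact Or.inr ((Submodule.range_subtype _).symm.trans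
      (LinearMap.range_eq_top.mpr (ConcreteCategory.bijective_of_isIso incl).2))

end IrreducibleRepresentations

/-- The wreath product `A ≀ Perm ι`, with `Perm ι` permuting the coordinates of `ι → A`. -/
abbrev PermWreath (A ι : Type*) [Group A] := (ι → A) ⋊[mulAutArrow] Perm ι

section CoordinateActions

variable {K A ι V : Type*} [Field K] [CommGroup A] [DecidableEq ι] [AddCommGroup V] [Module K V]
  {ρ : Representation K (PermWreath A ι) V}

lemma mulAutArrow_mulSingle (σ : Perm ι) (i : ι) (x : A) :
    mulAutArrow σ (Pi.mulSingle i x : ι → A) = Pi.mulSingle (σ i) x := by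
  funext j
  rw [mulAutArrow_apply_apply]
  change (Pi.mulSingle i x : ι → A) (σ.symm j) = _
  rw [Pi.mulSingle_apply, Pi.mulSingle_apply]
  exact if_congr (Equiv.symm_apply_eq σ) rfl rfl

lemma inl_mulSingle_mul (g : PermWreath A ι) (i : ι) (x : A) :
    inl (Pi.mulSingle (g.right i) x) * g = g * inl (Pi.mulSingle i x) := by
  refine SemidirectProduct.ext ?_ ?_
  · simp [mulAutArrow_mulSingle, mul_comm]
  · simp

omit [DecidableEq ι] in
lemma inl_mul_inv_mul_inr (σ : Perm ι) (b : ι → A) :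
    (inl (b * (mulAutArrow σ b)⁻¹) * inr σ : PermWreath A ι) = inl b * inr σ * (inl b)⁻¹ := by
  rw [← map_inv, map_mul, inl_aut, map_inv, map_inv]
  group

/-- The action of the `i`-th factor `A` of the base group on the vector `u`. -/
def coordAct (ρ : Representation K (PermWreath A ι) V) (u : V) (i : ι) (x : A) : V :=
  ρ (inl (Pi.mulSingle i x)) u

lemma coordAct_apply (g : PermWreath A ι) (u : V) (i : ι) (x : A) :
    coordAct ρ (ρ g u) (g.right i) x = ρ g (coordAct ρ u i x) := by
  unfold coordAct
  rw [← Module.End.mul_apply, ← map_mul, inl_mulSingle_mul, map_mul, Module.End.mul_apply]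

lemma coordAct_apply_eq_of_eq {u : V} {i j : ι} (h : coordAct ρ u i = coordAct ρ u j)
    (g : PermWreath A ι) :
    coordAct ρ (ρ g u) (g.right i) = coordAct ρ (ρ g u) (g.right j) := by
  funext x
  rw [coordAct_apply, coordAct_apply, h]

variable (ρ) in
/-- The vectors on which all factors of the base group act in the same way. -/
def balancedVectors : Subrepresentation ρ where
  toSubmodule :=
    { carrier := {u | ∀ i j, coordAct ρ u i = coordAct ρ u j}
      zero_mem' := fun i j => by simp [coordAct, funext_iff]
      add_mem' := fun {u v} hu hv i j => funext fun x => by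
        have h := congrArg₂ (· + ·) (congrFun (hu i j) x) (congrFun (hv i j) x)
        simpa only [coordAct, map_add] using h
      smul_mem' := fun c u hu i j => funext fun x => by
        have h := congrArg (c • ·) (congrFun (hu i j) x)
        simpa only [coordAct, map_smul] using h }
  apply_mem_toSubmodule g u hu i j := by
    simpa using coordAct_apply_eq_of_eq (hu (g.right.symm i) (g.right.symm j)) g

lemma commute_inl_of_balancedVectors_eq_top [Finite ι] (h : balancedVectors ρ = ⊤) (a : ι → A)
    (g : PermWreath A ι) : Commute (ρ (inl a)) (ρ g) := by
  have := Fintype.ofFinite ι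
  have ha : a ∈ (Submonoid.centralizer (Set.range ρ)).comap (ρ.comp inl) := by
    rw [← Finset.univ_prod_mulSingle a]
    refine Submonoid.prod_mem _ fun i _ => ?_
    rw [Submonoid.mem_comap, Submonoid.mem_centralizer_iff]
    rintro _ ⟨g, rfl⟩
    refine LinearMap.ext fun u => ?_
    have h_mem : ρ g u ∈ balancedVectors ρ := h ▸ Submodule.mem_top
    change ρ g (coordAct ρ u i (a i)) = coordAct ρ (ρ g u) i (a i)
    rw [h_mem i (g.right i), coordAct_apply]
  exact (Submonoid.mem_centralizer_iff.mp ha (ρ g) ⟨g, rfl⟩).symm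

end CoordinateActions

section TwistSum

variable {K A ι V : Type*} [Field K] [CommGroup A] [Fintype ι] [DecidableEq ι]
  [Fintype A] [AddCommGroup V] [Module K V] {ρ : Representation K (PermWreath A ι) V}

variable (ρ) in
/-- The sum of the operators of `b * (σ b)⁻¹` for `b` in the base group. Up to the factor
`inr σ`, these run over the conjugates of `inr σ` under the base group. -/
def twistSum (σ : Perm ι) : V →ₗ[K] V :=
  ∑ b : ι → A, ρ (inl (b * (mulAutArrow σ b)⁻¹))

lemma twistSum_apply (σ : Perm ι) (u : V) :
    twistSum ρ σ u = ∑ b : ι → A, ρ (inl (b * (mulAutArrow σ b)⁻¹)) u := by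
  rw [twistSum, LinearMap.sum_apply]

lemma coordAct_twistSum_eq_of_eq (σ : Perm ι) {u : V} {i j : ι}
    (h : coordAct ρ u i = coordAct ρ u j) :
    coordAct ρ (twistSum ρ σ u) i = coordAct ρ (twistSum ρ σ u) j := by
  funext x
  simp only [coordAct, twistSum_apply, map_sum]
  exact Finset.sum_congr rfl fun b _ =>
    congrFun (coordAct_apply_eq_of_eq h (inl (b * (mulAutArrow σ b)⁻¹))) x

lemma coordAct_twistSum_perm (σ : Perm ι) (u : V) (i : ι) :
    coordAct ρ (twistSum ρ σ u) (σ i) = coordAct ρ (twistSum ρ σ u) i := by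
  funext x
  simp only [coordAct, twistSum_apply, map_sum, ← Module.End.mul_apply, ← map_mul]
  rw [← Equiv.sum_comp (Equiv.mulRight (Pi.mulSingle i x : ι → A))]
  refine Finset.sum_congr rfl fun b _ => congrArg (fun a : ι → A => ρ (inl a) u) ?_
  rw [Equiv.coe_mulRight, map_mul (mulAutArrow σ), mulAutArrow_mulSingle, mul_inv_rev,
    mul_left_comm, mul_inv_cancel_left]
  beta_reduce
  ac_rfl

lemma coordAct_twistSum_eq_of_sameCycle {σ : Perm ι} {i j : ι} (h : σ.SameCycle i j) (u : V) :
    coordAct ρ (twistSum ρ σ u) i = coordAct ρ (twistSum ρ σ u) j := by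
  obtain ⟨m, -, rfl⟩ := h.exists_pow_eq'
  induction m with
  | zero => rfl
  | succ m ih => rw [ih ⟨m, rfl⟩, pow_succ', Perm.mul_apply, coordAct_twistSum_perm]

lemma trace_twistSum_mul (σ : Perm ι) :
    LinearMap.trace K V (twistSum ρ σ * ρ (inr σ)) =
      Nat.card (ι → A) * ρ.character (inr σ) := by
  rw [twistSum, Finset.sum_mul, map_sum, Nat.card_eq_fintype_card, ← nsmul_eq_mul,
    ← Finset.card_univ, ← Finset.sum_const]
  refine Finset.sum_congr rfl fun b _ => ?_
  rw [← map_mul, inl_mul_inv_mul_inr]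
  exact ρ.char_conj (inr σ) (inl b)

lemma exists_twistSum_ne_zero [CharZero K] {σ : Perm ι} (h : ρ.character (inr σ) ≠ 0) :
    ∃ v, twistSum ρ σ v ≠ 0 := by
  by_contra! h0
  have h_trace := trace_twistSum_mul (ρ := ρ) σ
  rw [LinearMap.ext (f := twistSum ρ σ) (g := 0) h0, zero_mul, map_zero] at h_trace
  exact mul_ne_zero (Nat.cast_ne_zero.mpr Nat.card_pos.ne') h h_trace.symm

end TwistSum

section Reduction

variable {K A ι V : Type*} [Field K] [CommGroup A] [DecidableEq ι] [AddCommGroup V] [Module K V]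
  {ρ : Representation K (PermWreath A ι) V}

lemma balancedVectors_eq_top [ρ.IsIrreducible] {u : V} (hu : u ≠ 0)
    (hu_mem : u ∈ balancedVectors ρ) : balancedVectors ρ = ⊤ := by
  refine (eq_bot_or_eq_top (balancedVectors ρ)).resolve_left fun h_bot => hu ?_
  exact (h_bot ▸ hu_mem : u ∈ (⊥ : Subrepresentation ρ))

variable [Finite ι]

lemma isIrreducible_comp_inr [IsAlgClosed K] [FiniteDimensional K V] [ρ.IsIrreducible]
    (h : balancedVectors ρ = ⊤) : IsIrreducible (ρ.comp inr : Representation K (Perm ι) V) := by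
  let extend (W : Subrepresentation (ρ.comp inr : Representation K (Perm ι) V)) :
      Subrepresentation ρ :=
    { toSubmodule := W.toSubmodule
      apply_mem_toSubmodule := fun g w hw => by
        obtain ⟨c, hc⟩ := exists_eq_smul_one_of_commute
          (commute_inl_of_balancedVectors_eq_top h g.left)
        rw [← inl_left_mul_inr_right g, map_mul, hc, smul_mul_assoc, one_mul]
        exact W.toSubmodule.smul_mem c (W.apply_mem_toSubmodule g.right hw) }
  have : Nontrivial V := IsSimpleModule.nontrivial K[PermWreath A ι] ρ.asModule
  exact isIrreducible_of_forall_eq_bot_or_eq_top fun W =>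
    (eq_bot_or_eq_top (extend W)).imp (congrArg Subrepresentation.toSubmodule)
      (congrArg Subrepresentation.toSubmodule)

variable [CharZero K]

lemma exists_mem_balancedVectors_of_sameCycle [Finite A] {σ : Perm ι}
    (hσ : ∀ i j, σ.SameCycle i j) (hσ0 : ρ.character (inr σ) ≠ 0) :
    ∃ u ≠ 0, u ∈ balancedVectors ρ := by
  have := Fintype.ofFinite A
  have := Fintype.ofFinite ι
  obtain ⟨v, hv⟩ := exists_twistSum_ne_zero hσ0
  exact ⟨_, hv, fun i j => coordAct_twistSum_eq_of_sameCycle (hσ i j) v⟩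

/-- `twistSum ρ σ` aligns all coordinates but `k`, a group element moves the exceptional
coordinate to `g k`, and `twistSum ρ τ` aligns it with `τ (g k) ≠ g k`. -/
lemma exists_mem_balancedVectors_of_sameCycle_of_ne [Finite A] [ρ.IsIrreducible] {σ τ : Perm ι}
    {k : ι} (hσ : ∀ i j, i ≠ k → j ≠ k → σ.SameCycle i j) (hτ : ∀ i, τ i ≠ i)
    (hσ0 : ρ.character (inr σ) ≠ 0) (hτ0 : ρ.character (inr τ) ≠ 0) :
    ∃ u ≠ 0, u ∈ balancedVectors ρ := by
  have := Fintype.ofFinite A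
  have := Fintype.ofFinite ι
  obtain ⟨v, hv⟩ := exists_twistSum_ne_zero hσ0
  obtain ⟨w, hw⟩ := exists_twistSum_ne_zero hτ0
  obtain ⟨g, hg⟩ := exists_apply_apply_ne_zero (ρ := ρ) hv hw
  set u := twistSum ρ τ (ρ g (twistSum ρ σ v))
  have h_off {i j : ι} (hi : i ≠ g.right k) (hj : j ≠ g.right k) :
      coordAct ρ u i = coordAct ρ u j := by
    rw [ne_eq, ← Equiv.symm_apply_eq] at hi hj
    refine coordAct_twistSum_eq_of_eq τ ?_
    simpa using coordAct_apply_eq_of_eq (coordAct_twistSum_eq_of_sameCycle (hσ _ _ hi hj) v) g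
  have h_move (i : ι) : ∃ j ≠ g.right k, coordAct ρ u j = coordAct ρ u i := by
    by_cases hi : i = g.right k
    · exact ⟨τ i, hi ▸ hτ i, coordAct_twistSum_perm τ _ i⟩
    · exact ⟨i, hi, rfl⟩
  refine ⟨u, hg, fun i j => ?_⟩
  obtain ⟨i', hi', hi⟩ := h_move i
  obtain ⟨j', hj', hj⟩ := h_move j
  rw [← hi, ← hj, h_off hi' hj']

end Reduction

section RegularPermutations

variable {n p : ℕ}

lemma exists_sameCycle_compl_singleton (hn : 3 ≤ n) (hp : ¬ p ∣ n - 1) :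
    ∃ (σ : Perm (Fin n)) (k : Fin n), ¬ p ∣ orderOf σ ∧
      ∀ i j, i ≠ k → j ≠ k → σ.SameCycle i j := by
  obtain ⟨σ, hσ⟩ : ∃ σ : Perm (Fin n), σ.cycleType = {n - 1} :=
    (Perm.exists_with_cycleType_iff _).mpr (by simp; omega)
  have h_cycle : σ.IsCycle := Perm.card_cycleType_eq_one.mp (by rw [hσ, Multiset.card_singleton])
  have h_fixed : σ.supportᶜ.card = 1 := by
    rw [Finset.card_compl, ← Perm.sum_cycleType, hσ, Multiset.sum_singleton, Fintype.card_fin]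
    omega
  obtain ⟨k, hk⟩ := Finset.card_eq_one.mp h_fixed
  have h_moved {i : Fin n} (hi : i ≠ k) : σ i ≠ i := by
    rw [← Perm.mem_support, ← Finset.notMem_compl, hk, Finset.mem_singleton]
    exact hi
  exact ⟨σ, k, by rwa [← Perm.lcm_cycleType, hσ, Multiset.lcm_singleton, normalize_eq],
    fun i j hi hj => h_cycle.sameCycle (h_moved hi) (h_moved hj)⟩

lemma exists_forall_apply_ne (hp : p.Prime) (hn : 5 ≤ n) (hpn : p ∣ n) :
    ∃ τ : Perm (Fin n), ¬ p ∣ orderOf τ ∧ ∀ i, τ i ≠ i := by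
  obtain ⟨c, hc2, hc3, hpc⟩ : ∃ c, 2 ≤ c ∧ c ≤ 3 ∧ ¬ p ∣ c := by
    obtain h2 | h3 := not_dvd_two_or_not_dvd_three hp
    · exact ⟨2, le_rfl, by omega, h2⟩
    · exact ⟨3, by omega, le_rfl, h3⟩
  have hpc' : ¬ p ∣ n - c := fun h => hpc ((Nat.dvd_sub_iff_right (by omega) hpn).mp h)
  obtain ⟨τ, hτ⟩ : ∃ τ : Perm (Fin n), τ.cycleType = {n - c, c} :=
    (Perm.exists_with_cycleType_iff _).mpr (by simp; omega)
  refine ⟨τ, fun h => ?_, fun i => ?_⟩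
  · rw [← Perm.lcm_cycleType, hτ] at h
    refine (hp.not_dvd_mul hpc' hpc) (h.trans (Multiset.lcm_dvd.mpr fun a ha => ?_))
    obtain rfl | rfl := by simpa using ha
    · exact dvd_mul_right _ _
    · exact dvd_mul_left _ _
  · have h_support : τ.support = Finset.univ := by
      rw [← Finset.card_eq_iff_eq_univ, ← Perm.sum_cycleType, hτ, Fintype.card_fin,
        Multiset.insert_eq_cons, Multiset.sum_cons, Multiset.sum_singleton]
      omega
    exact Perm.mem_support.mp (h_support ▸ Finset.mem_univ i)

end RegularPermutations

theorem stmt_17_general {A V : Type*} [CommGroup A] [Finite A] [AddCommGroup V] [Module ℂ V]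
    [FiniteDimensional ℂ V] {n p : ℕ} (hn : 9 ≤ n) (hp : p.Prime)
    (ρ : Representation ℂ (PermWreath A (Fin n)) V) [ρ.IsIrreducible]
    (hdim : Module.finrank ℂ V ≠ 1) :
    ∃ σ : Perm (Fin n), ¬ p ∣ orderOf σ ∧ ρ.character (inr σ) = 0 := by
  by_contra! h
  obtain ⟨u, hu, hu_mem⟩ : ∃ u ≠ 0, u ∈ balancedVectors ρ := by
    by_cases hpn : p ∣ n
    · obtain ⟨σ, k, hσ, hσk⟩ := exists_sameCycle_compl_singleton (by omega)
        (not_dvd_sub_one_of_dvd hp (by omega) hpn)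
      obtain ⟨τ, hτ, hτ_ne⟩ := exists_forall_apply_ne hp (by omega) hpn
      exact exists_mem_balancedVectors_of_sameCycle_of_ne hσk hτ_ne (h σ hσ) (h τ hτ)
    · exact exists_mem_balancedVectors_of_sameCycle sameCycle_finRotate
        (h _ (not_dvd_orderOf_finRotate hpn))
  have := isIrreducible_comp_inr (balancedVectors_eq_top hu hu_mem)
  obtain ⟨σ, hσ, hσ0⟩ := exists_character_eq_zero_of_perm hp hn (ρ.comp inr) hdim
  exact h σ hσ hσ0

end WreathProduct

/-- For `n ≥ 9` and any prime `p ≤ n`, every non-linear irreducible character of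
`G(r,1,n)` vanishes at some `p`-regular element. -/
theorem stmt_17 (r n p : ℕ) (hr : 0 < r) (hn : 9 ≤ n) (hp : p.Prime) (hpn : p ≤ n)
    (V : FDRep ℂ (GWreath r n)) (hV : Simple V) (hnonlin : V.character 1 ≠ 1) :
    ∃ g : GWreath r n, ¬ p ∣ orderOf g ∧ V.character g = 0 := by
  have : NeZero r := ⟨hr.ne'⟩
  let ρ : Representation ℂ (PermWreath (Multiplicative (ZMod r)) (Fin n)) V := V.ρ
  have : ρ.IsIrreducible := isIrreducible_of_simple V
  obtain ⟨σ, hσ, hσ0⟩ := stmt_17_general hn hp ρ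
    fun hdim => hnonlin (by rw [FDRep.char_one, hdim, Nat.cast_one])
  exact ⟨SemidirectProduct.inr σ,
    by rwa [orderOf_injective _ SemidirectProduct.inr_injective], hσ0⟩
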